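/- arXiv:1607.04499 — 2 statements merged into one kernel-verified Lean document; each statement's English description precedes it below -/
import Mathlib

section
/- Let F be a finite field with q elements, let n and k be positive integers, and let A ∈ M_n(F) have at most k nontrivial nilpotent blocks, i.e., rank(A) − rank(A²) ≤ k. Then the number of pairs (U, V) with U ∈ F^(k×n) and V ∈ F^(n×k) such that the minimal polynomial of A + V·U is NOT divisible by z² is at least ((q² − 2)(q² − q − 1)(q − 1) / (q⁴(q + 1))) · q^(2nk). In particular this fraction is at least 1 − 3/q. -/
/-!
For a square matrix `B`, `X ^ 2` does not divide `minpoly F B` as soon as `ker B` and `range B`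
meet trivially. Choose `U` first: `ker A ∩ range A` has dimension `rank A - rank A² ≤ k`, so a
random `U` is likely to be injective on it. Given such a `U`, put
`C = A (ker U) + (ker U ∩ ker A)`. By rank-nullity `dim C ≤ dim ker U`, so `Fⁿ ⧸ C` has at least
the dimension of `range U`. As `A + V U` maps `ker U` into `C`, it induces a map
`range U → Fⁿ ⧸ C`, which is a uniformly random linear map since `V` is. If the induced map is
injective, then `(A + V U)⁻¹ C ≤ ker U`, and this forces `ker (A + V U) ∩ range (A + V U) = 0`.

A random linear map into a space of at least the same dimension is injective with probability at
least `∏ (1 - q⁻ⁱ) ≥ 1 - q⁻¹ - q⁻²`, so both choices succeed with probability at least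
`(1 - q⁻¹ - q⁻²)²`.
-/

section Proportion

variable {α β : Type*}

/-- The probability that a uniformly random element of the finite type `α` lies in `s`; for an
infinite or empty `α` this is `0`, by division by zero. -/
noncomputable def proportion (s : Set α) : ℚ := Nat.card s / Nat.card α

lemma proportion_nonneg (s : Set α) : 0 ≤ proportion s := by
  unfold proportion
  positivity

lemma proportion_mono [Finite α] {s t : Set α} (h : s ⊆ t) : proportion s ≤ proportion t := by
  unfold proportion
  gcongr
  exact Nat.card_mono t.toFinite h

lemma proportion_preimage_equiv (e : α ≃ β) (s : Set β) :
    proportion (e ⁻¹' s) = proportion s := by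
  rw [proportion, proportion, Nat.card_preimage_of_injective e.injective (by simp),
    Nat.card_congr e]

lemma natCard_preimage_of_surjective {G H : Type*} [AddGroup G] [AddGroup H] {f : G →+ H}
    (hf : Function.Surjective f) (s : Set H) :
    Nat.card (f ⁻¹' s) = Nat.card s * Nat.card f.ker := by
  rw [← Nat.card_prod]
  exact Nat.card_congr <| (Equiv.sigmaSubtypeFiberEquivSubtype f fun _ => Iff.rfl).symm.trans <|
    (Equiv.sigmaCongrRight fun y : s => f.fiberEquivKerOfSurjective hf y.1).trans
      (Equiv.sigmaEquivProd _ _)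

lemma proportion_preimage_of_surjective {G H : Type*} [AddGroup G] [AddGroup H] [Finite G]
    {f : G →+ H} (hf : Function.Surjective f) (s : Set H) :
    proportion (f ⁻¹' s) = proportion s := by
  have card_G : Nat.card G = Nat.card H * Nat.card f.ker := by
    simpa using natCard_preimage_of_surjective hf Set.univ
  rw [proportion, proportion, natCard_preimage_of_surjective hf, card_G]
  push_cast
  exact mul_div_mul_right _ _ (mod_cast Nat.card_pos.ne')

lemma natCard_eq_sum_natCard_slice [Fintype α] [Finite β] (r : α → β → Prop) :
    Nat.card {p : α × β | r p.1 p.2} = ∑ a, Nat.card {b | r a b} :=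
  (Nat.card_congr (Equiv.subtypeProdEquivSigmaSubtype r)).trans Nat.card_sigma

lemma proportion_eq_sum_proportion_slice_div [Fintype α] [Finite β] (r : α → β → Prop) :
    proportion {p : α × β | r p.1 p.2} = (∑ a, proportion {b | r a b}) / Nat.card α := by
  simp only [proportion, natCard_eq_sum_natCard_slice, Nat.card_prod, ← Finset.sum_div]
  push_cast
  rw [div_div, mul_comm]

lemma proportion_mul_le_proportion_of_forall_slice [Finite α] [Finite β] {s : Set α}
    {r : α → β → Prop} {c : ℚ} (h : ∀ a ∈ s, c ≤ proportion {b | r a b}) :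
    proportion s * c ≤ proportion {p : α × β | r p.1 p.2} := by
  classical
  have := Fintype.ofFinite α
  calc proportion s * c = (∑ _a ∈ s.toFinset, c) / Nat.card α := by
        rw [proportion, Finset.sum_const, Set.toFinset_card, ← Nat.card_eq_fintype_card,
          nsmul_eq_mul, div_mul_eq_mul_div]
    _ ≤ (∑ a ∈ s.toFinset, proportion {b | r a b}) / Nat.card α := by
        gcongr with a ha
        exact h a (by simpa using ha)
    _ ≤ (∑ a, proportion {b | r a b}) / Nat.card α := by
        gcongr
        · exact fun _ _ _ => proportion_nonneg _
        · exact Finset.subset_univ _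
    _ = proportion {p : α × β | r p.1 p.2} := (proportion_eq_sum_proportion_slice_div r).symm

end Proportion

section Inequalities

lemma one_sub_sub_sq_le_prod_one_sub_pow {R : Type*} [CommRing R] [LinearOrder R]
    [IsStrictOrderedRing R] {x : R} (h₀ : 0 ≤ x) (h₁ : x ≤ 1) (n : ℕ) :
    1 - x - x ^ 2 ≤ ∏ i ∈ Finset.range n, (1 - x ^ (i + 1)) := by
  obtain _ | n := n
  · simp only [Finset.range_zero, Finset.prod_empty]
    linarith [sq_nonneg x]
  -- The extra term `x ^ (n + 2)` makes the induction go through.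
  suffices 1 - x - x ^ 2 + x ^ (n + 2) ≤ ∏ i ∈ Finset.range (n + 1), (1 - x ^ (i + 1)) by
    linarith [pow_nonneg h₀ (n + 2)]
  induction n with
  | zero => simp
  | succ n ih =>
    have pow_le_sq : x ^ (n + 2) ≤ x ^ 2 := pow_le_pow_of_le_one h₀ h₁ (by lia)
    calc 1 - x - x ^ 2 + x ^ (n + 1 + 2)
        ≤ (1 - x - x ^ 2 + x ^ (n + 2)) * (1 - x ^ (n + 2)) := by
          linear_combination mul_nonneg (pow_nonneg h₀ (n + 2)) (sub_nonneg.2 pow_le_sq)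
      _ ≤ (∏ i ∈ Finset.range (n + 1), (1 - x ^ (i + 1))) * (1 - x ^ (n + 2)) := by
          gcongr
          exact sub_nonneg.2 (pow_le_one₀ h₀ h₁)
      _ = ∏ i ∈ Finset.range (n + 2), (1 - x ^ (i + 1)) := (Finset.prod_range_succ _ _).symm

variable {K : Type*} [Field K] [LinearOrder K] [IsStrictOrderedRing K]

lemma blockBound_le_sq {q : K} (hq : 2 ≤ q) :
    (q ^ 2 - 2) * (q ^ 2 - q - 1) * (q - 1) / (q ^ 4 * (q + 1)) ≤ (1 - q⁻¹ - q⁻¹ ^ 2) ^ 2 := by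
  have common_denominator :
      (1 - q⁻¹ - q⁻¹ ^ 2) ^ 2 = (q ^ 2 - q - 1) ^ 2 * (q + 1) / (q ^ 4 * (q + 1)) := by
    field_simp
  have difference_nonneg : 0 ≤ (q ^ 2 - q - 1) * (q ^ 2 - 3) :=
    mul_nonneg (by nlinarith) (by nlinarith)
  rw [common_denominator]
  gcongr ?_ / _
  linear_combination difference_nonneg

lemma one_sub_three_div_le_blockBound {q : K} (hq : 2 ≤ q) :
    1 - 3 / q ≤ (q ^ 2 - 2) * (q ^ 2 - q - 1) * (q - 1) / (q ^ 4 * (q + 1)) := by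
  have common_denominator :
      1 - 3 / q = (q - 3) * q ^ 3 * (q + 1) / (q ^ 4 * (q + 1)) := by
    field_simp
  have difference_nonneg : 0 ≤ q ^ 3 + 5 * q ^ 2 - 2 := by
    nlinarith [pow_nonneg (zero_le_two.trans hq) 3]
  rw [common_denominator]
  gcongr ?_ / _
  linear_combination difference_nonneg

end Inequalities

open Module LinearMap Function Polynomial

section LinearAlgebra

lemma not_X_sq_dvd_minpoly_of_disjoint {F V : Type*} [Field F] [AddCommGroup V] [Module F V]
    {b : End F V} (hb : IsIntegral F b) (h : Disjoint (ker b) (range b)) :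
    ¬ X ^ 2 ∣ minpoly F b := by
  rintro ⟨p, hp⟩
  have hp₀ : p ≠ 0 := by
    rintro rfl
    exact minpoly.ne_zero hb (by simpa using hp)
  have aeval_X_mul : aeval b (X * p) = 0 := by
    ext x
    have aeval_minpoly : b (b (aeval b p x)) = 0 := by
      simpa [hp, sq] using congr($(minpoly.aeval F b) x)
    simpa using Submodule.disjoint_def.1 h _ aeval_minpoly (mem_range_self b _)
  have X_sq_dvd_X : (X : F[X]) ^ 2 ∣ X :=
    (mul_dvd_mul_iff_right hp₀).1 (hp ▸ minpoly.dvd F b aeval_X_mul)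
  simpa using X_pow_dvd_iff.1 X_sq_dvd_X 1 one_lt_two

variable {F V W X Y Z : Type*} [Field F] [AddCommGroup V] [Module F V] [AddCommGroup W]
  [Module F W] [AddCommGroup X] [Module F X] [AddCommGroup Y] [Module F Y] [AddCommGroup Z]
  [Module F Z]

lemma finrank_map_add_finrank_inf_ker [FiniteDimensional F X] (f : X →ₗ[F] Y)
    (p : Submodule F X) :
    finrank F (p.map f) + finrank F (p ⊓ ker f : Submodule F X) = finrank F p := by
  rw [← (f.domRestrict p).finrank_range_add_finrank_ker, range_domRestrict, ker_domRestrict,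
    ← Submodule.map_comap_subtype, Submodule.finrank_map_subtype_eq]

lemma finrank_ker_inf_range_mulVecLin {n : Type*} [Fintype n] (A : Matrix n n F) :
    finrank F (ker A.mulVecLin ⊓ range A.mulVecLin : Submodule F (n → F)) =
      A.rank - (A * A).rank := by
  have rank_sq : (A * A).rank = finrank F ((range A.mulVecLin).map A.mulVecLin) := by
    rw [Matrix.rank, Matrix.mulVecLin_mul, range_comp]
  rw [rank_sq, inf_comm, Matrix.rank]
  exact Nat.eq_sub_of_add_eq' (finrank_map_add_finrank_inf_ker _ _)

lemma exists_comp_comp_eq_self (u : Y →ₗ[F] X) : ∃ σ : X →ₗ[F] Y, u ∘ₗ σ ∘ₗ u = u := by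
  obtain ⟨s, hs⟩ := u.rangeRestrict.exists_rightInverse_of_surjective u.range_rangeRestrict
  obtain ⟨σ, hσ⟩ := s.exists_extend
  refine ⟨σ, LinearMap.ext fun y => ?_⟩
  have hσu : σ (u y) = s (u.rangeRestrict y) := congr($hσ (u.rangeRestrict y))
  simpa [hσu] using congr(($hs (u.rangeRestrict y)).1)

lemma surjective_comp_comp {i : V →ₗ[F] X} (hi : Injective i) {p : Y →ₗ[F] W}
    (hp : Surjective p) : Surjective fun f : X →ₗ[F] Y => p ∘ₗ f ∘ₗ i := by
  intro φ
  obtain ⟨r, hr⟩ := i.exists_leftInverse_of_injective (ker_eq_bot.2 hi)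
  obtain ⟨s, hs⟩ := p.exists_rightInverse_of_surjective (range_eq_top.2 hp)
  refine ⟨s ∘ₗ φ ∘ₗ r, LinearMap.ext fun x => ?_⟩
  have hrx : r (i x) = x := congr($hr x)
  simpa [hrx] using congr($hs (φ x))

lemma injective_basis_constr_iff {ι : Type*} (b : Basis ι F V) (v : ι → W) :
    Injective (b.constr F v) ↔ LinearIndependent F v := by
  have linearCombination_eq :
      Finsupp.linearCombination F v = b.constr F v ∘ₗ b.repr.symm.toLinearMap := by
    ext
    simp
  rw [LinearIndependent, linearCombination_eq, coe_comp]
  exact (b.repr.symm.toEquiv.injective_comp _).symm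

lemma comap_add_comp_le_ker {a : Y →ₗ[F] Z} {u : Y →ₗ[F] X} {σ : X →ₗ[F] Y} {v : X →ₗ[F] Z}
    {C : Submodule F Z} (hσ : u ∘ₗ σ ∘ₗ u = u) (hC : (ker u).map a ≤ C)
    (hv : Injective (C.mkQ ∘ₗ (a ∘ₗ σ + v) ∘ₗ (range u).subtype)) :
    C.comap (a + v ∘ₗ u) ≤ ker u := by
  intro y hy
  have sub_mem_ker : y - σ (u y) ∈ ker u := by simpa [sub_eq_zero] using congr($hσ y).symm
  have image_mem : (a ∘ₗ σ + v) (u y) ∈ C := by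
    simpa [add_sub_right_comm] using C.sub_mem hy (hC (Submodule.mem_map_of_mem sub_mem_ker))
  have : (⟨u y, mem_range_self u y⟩ : range u) = 0 :=
    (injective_iff_map_eq_zero _).1 hv _ ((Submodule.Quotient.mk_eq_zero C).2 image_mem)
  exact congr(($this).1)

lemma disjoint_ker_range_add_comp {a : Y →ₗ[F] Y} {u : Y →ₗ[F] X} {v : X →ₗ[F] Y}
    {C : Submodule F Y} (hu : Disjoint (ker a ⊓ range a) (ker u)) (hC : ker u ⊓ ker a ≤ C)
    (hv : C.comap (a + v ∘ₗ u) ≤ ker u) :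
    Disjoint (ker (a + v ∘ₗ u)) (range (a + v ∘ₗ u)) := by
  rw [Submodule.disjoint_def]
  rintro _ hy ⟨x, rfl⟩
  set y := (a + v ∘ₗ u) x with y_def
  have u_y : u y = 0 := hv (show (a + v ∘ₗ u) y ∈ C from mem_ker.1 hy ▸ C.zero_mem)
  have a_y : a y = 0 := by simpa [u_y] using hy
  have u_x : u x = 0 := hv (hC ⟨u_y, a_y⟩)
  have y_eq : y = a x := by simp [y_def, u_x]
  exact Submodule.disjoint_def.1 hu _ ⟨a_y, x, y_eq.symm⟩ u_y

end LinearAlgebra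

section RandomLinearMap

variable {F V W X Y : Type*} [Field F] [Fintype F] [AddCommGroup V] [Module F V]
  [AddCommGroup W] [Module F W] [AddCommGroup X] [Module F X] [AddCommGroup Y] [Module F Y]

/-- The quantity `1 - 1/q - 1/q²` for `q = #F`: the beginning of the expansion of Euler's product
`∏ (1 - q⁻ⁱ)`, used as a lower bound for the probability that a random linear map over `F` into a
space of at least the same dimension is injective. -/
def injectivityBound (F : Type*) [Fintype F] : ℚ :=
  1 - (Fintype.card F : ℚ)⁻¹ - (Fintype.card F : ℚ)⁻¹ ^ 2

variable (F) in
lemma injectivityBound_nonneg : 0 ≤ injectivityBound F := by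
  have : (Fintype.card F : ℚ)⁻¹ ≤ 2⁻¹ := inv_anti₀ two_pos (mod_cast Fintype.one_lt_card)
  have : 0 ≤ (Fintype.card F : ℚ)⁻¹ := by positivity
  unfold injectivityBound
  nlinarith

lemma natCard_injective_linearMap [FiniteDimensional F V] [Finite W]
    (h : finrank F V ≤ finrank F W) :
    Nat.card {f : V →ₗ[F] W | Injective f} =
      ∏ i : Fin (finrank F V), (Fintype.card F ^ finrank F W - Fintype.card F ^ (i : ℕ)) := by
  rw [← card_linearIndependent h]
  let b := finBasis F V
  exact Nat.card_congr
    ((b.constr F).toEquiv.subtypeEquiv fun v => (injective_basis_constr_iff b v).symm).symm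

lemma proportion_injective_linearMap [FiniteDimensional F V] [Finite W]
    (h : finrank F V ≤ finrank F W) :
    proportion {f : V →ₗ[F] W | Injective f} =
      ∏ i ∈ Finset.range (finrank F V), (1 - (Fintype.card F : ℚ)⁻¹ ^ (finrank F W - i)) := by
  have natCard_hom :
      Nat.card (V →ₗ[F] W) = ∏ _i ∈ Finset.range (finrank F V), Fintype.card F ^ finrank F W := by
    rw [natCard_eq_pow_finrank (K := F), finrank_linearMap, Nat.card_eq_fintype_card,
      Finset.prod_const, Finset.card_range, ← pow_mul, mul_comm]
  have card_ne_zero : (Fintype.card F : ℚ) ≠ 0 := mod_cast Fintype.card_ne_zero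
  rw [proportion, natCard_injective_linearMap h, natCard_hom,
    Fin.prod_univ_eq_prod_range (fun i => Fintype.card F ^ finrank F W - Fintype.card F ^ i),
    Nat.cast_prod, Nat.cast_prod, ← Finset.prod_div_distrib]
  refine Finset.prod_congr rfl fun i hi => ?_
  have hi : i ≤ finrank F W := (Finset.mem_range.1 hi).le.trans h
  rw [Nat.cast_sub (Nat.pow_le_pow_right Fintype.card_pos hi), inv_pow,
    pow_sub₀ _ card_ne_zero hi]
  push_cast
  field_simp

lemma injectivityBound_le_proportion_injective [FiniteDimensional F V] [Finite W]
    (h : finrank F V ≤ finrank F W) :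
    injectivityBound F ≤ proportion {f : V →ₗ[F] W | Injective f} := by
  have hx₀ : 0 ≤ (Fintype.card F : ℚ)⁻¹ := by positivity
  have hx₁ : (Fintype.card F : ℚ)⁻¹ ≤ 1 := inv_le_one_of_one_le₀ (mod_cast Fintype.card_pos)
  rw [proportion_injective_linearMap h]
  set x := (Fintype.card F : ℚ)⁻¹
  calc injectivityBound F ≤ ∏ i ∈ Finset.range (finrank F W), (1 - x ^ (i + 1)) :=
        one_sub_sub_sq_le_prod_one_sub_pow hx₀ hx₁ _
    _ = ∏ i ∈ Finset.range (finrank F W), (1 - x ^ (finrank F W - i)) := by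
        rw [← Finset.prod_range_reflect]
        refine Finset.prod_congr rfl fun i hi => ?_
        rw [show finrank F W - 1 - i + 1 = finrank F W - i by grind]
    _ ≤ ∏ i ∈ Finset.range (finrank F V), (1 - x ^ (finrank F W - i)) :=
        Finset.prod_le_prod_of_subset_of_le_one (Finset.range_mono h)
          (fun _ _ => sub_nonneg.2 (pow_le_one₀ hx₀ hx₁))
          (fun _ _ _ => sub_le_self _ (pow_nonneg hx₀ _))

lemma injectivityBound_le_proportion_injective_comp [Finite X] [Finite Y] {i : V →ₗ[F] X}
    (hi : Injective i) {p : Y →ₗ[F] W} (hp : Surjective p) (h : finrank F V ≤ finrank F W)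
    (g : X →ₗ[F] Y) :
    injectivityBound F ≤ proportion {f : X →ₗ[F] Y | Injective (p ∘ₗ (g + f) ∘ₗ i)} := by
  have : Finite V := .of_injective i hi
  have : Finite W := .of_surjective p hp
  have : Finite (X →ₗ[F] Y) := finite_of_finite F
  let compComp : (X →ₗ[F] Y) →+ (V →ₗ[F] W) := (lcomp F W i ∘ₗ compRight F p).toAddMonoidHom
  calc injectivityBound F ≤ proportion {φ : V →ₗ[F] W | Injective φ} :=
        injectivityBound_le_proportion_injective h
    _ = proportion {f : X →ₗ[F] Y | Injective (p ∘ₗ f ∘ₗ i)} :=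
        (proportion_preimage_of_surjective (f := compComp) (surjective_comp_comp hi hp) _).symm
    _ = proportion {f : X →ₗ[F] Y | Injective (p ∘ₗ (g + f) ∘ₗ i)} :=
        (proportion_preimage_equiv (Equiv.addLeft g) _).symm

lemma injectivityBound_le_proportion_disjoint_ker [Finite X] [Finite Y] {p : Submodule F Y}
    (hp : finrank F p ≤ finrank F X) :
    injectivityBound F ≤ proportion {u : Y →ₗ[F] X | Disjoint p (ker u)} := by
  simpa [disjoint_ker_iff_injOn, Set.injOn_iff_injective] using!
    injectivityBound_le_proportion_injective_comp p.subtype_injective surjective_id (p := .id) hp 0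

lemma injectivityBound_le_proportion_disjoint_ker_range [Finite X] [Finite Y] (a : Y →ₗ[F] Y)
    {u : Y →ₗ[F] X} (hu : Disjoint (ker a ⊓ range a) (ker u)) :
    injectivityBound F ≤
      proportion {v : X →ₗ[F] Y | Disjoint (ker (a + v ∘ₗ u)) (range (a + v ∘ₗ u))} := by
  obtain ⟨σ, hσ⟩ := exists_comp_comp_eq_self u
  let C := (ker u).map a ⊔ (ker u ⊓ ker a)
  have finrank_C_le : finrank F C ≤ finrank F (ker u) :=
    (Submodule.finrank_add_le_finrank_add_finrank _ _).trans_eq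
      (finrank_map_add_finrank_inf_ker a (ker u))
  have finrank_range_le : finrank F (range u) ≤ finrank F (Y ⧸ C) := by
    linarith [u.finrank_range_add_finrank_ker, C.finrank_quotient_add_finrank]
  have : Finite (X →ₗ[F] Y) := finite_of_finite F
  calc injectivityBound F
      ≤ proportion {v | Injective (C.mkQ ∘ₗ (a ∘ₗ σ + v) ∘ₗ (range u).subtype)} :=
        injectivityBound_le_proportion_injective_comp (range u).subtype_injective
          C.mkQ_surjective finrank_range_le (a ∘ₗ σ)
    _ ≤ _ := proportion_mono fun _ hv =>
        disjoint_ker_range_add_comp hu le_sup_right (comap_add_comp_le_ker hσ le_sup_left hv)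

theorem sq_injectivityBound_le_proportion_minpoly_end [Finite X] [Finite Y] {a : End F Y}
    (ha : finrank F (ker a ⊓ range a : Submodule F Y) ≤ finrank F X) :
    injectivityBound F ^ 2 ≤ proportion {p : (Y →ₗ[F] X) × (X →ₗ[F] Y) |
      ¬ Polynomial.X ^ 2 ∣ minpoly F (a + p.2 ∘ₗ p.1)} := by
  have : Finite (X →ₗ[F] Y) := finite_of_finite F
  have : Finite (Y →ₗ[F] X) := finite_of_finite F
  have slice_le (u : Y →ₗ[F] X) (hu : Disjoint (ker a ⊓ range a) (ker u)) :
      injectivityBound F ≤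
        proportion {v : X →ₗ[F] Y | ¬ Polynomial.X ^ 2 ∣ minpoly F (a + v ∘ₗ u)} :=
    (injectivityBound_le_proportion_disjoint_ker_range a hu).trans <|
      proportion_mono fun v hv =>
        not_X_sq_dvd_minpoly_of_disjoint (Algebra.IsIntegral.isIntegral (a + v ∘ₗ u)) hv
  calc injectivityBound F ^ 2
      ≤ proportion {u : Y →ₗ[F] X | Disjoint (ker a ⊓ range a) (ker u)} *
          injectivityBound F := by
        rw [sq]
        gcongr
        · exact injectivityBound_nonneg F
        · exact injectivityBound_le_proportion_disjoint_ker ha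
    _ ≤ _ := proportion_mul_le_proportion_of_forall_slice slice_le

theorem sq_injectivityBound_le_proportion_minpoly_matrix {m n : Type*} [Fintype m] [Fintype n]
    [DecidableEq n] {A : Matrix n n F}
    (hA : A.rank - (A * A).rank ≤ Fintype.card m) :
    injectivityBound F ^ 2 ≤ proportion {p : Matrix m n F × Matrix n m F |
      ¬ Polynomial.X ^ 2 ∣ minpoly F (A + p.2 * p.1)} := by
  classical
  let e : Matrix m n F × Matrix n m F ≃ ((n → F) →ₗ[F] (m → F)) × ((m → F) →ₗ[F] (n → F)) :=
    Matrix.toLin'.toEquiv.prodCongr Matrix.toLin'.toEquiv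
  have minpoly_eq (p : Matrix m n F × Matrix n m F) :
      minpoly F (A.toLin' + (e p).2 ∘ₗ (e p).1) = minpoly F (A + p.2 * p.1) := by
    rw [← Matrix.minpoly_toLin' (A + p.2 * p.1), map_add, Matrix.toLin'_mul]
    rfl
  have finrank_le : finrank F (ker A.toLin' ⊓ range A.toLin' : Submodule F (n → F)) ≤
      finrank F (m → F) := by
    rwa [Matrix.toLin'_apply', finrank_ker_inf_range_mulVecLin, finrank_fintype_fun_eq_card]
  simpa only [← proportion_preimage_equiv e, Set.preimage_ofPred_eq, minpoly_eq] using
    sq_injectivityBound_le_proportion_minpoly_end finrank_le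

end RandomLinearMap

/-- if `A` has at most `k` nontrivial nilpotent blocks
(i.e. `rank A - rank A² ≤ k`), then the number of pairs `(U, V)` such that the
minimal polynomial of `A + V·U` is not divisible by `z²` is at least
`((q² - 2)(q² - q - 1)(q - 1) / (q⁴(q + 1))) · q^(2nk)`, and this fraction is at
least `1 - 3/q`. -/
theorem few_nilpotent_blocks_precondition_count
    {F : Type*} [Field F] [Fintype F] (n k : ℕ) (hn : 0 < n) (hk : 0 < k)
    (q : ℚ) (hq : q = (Fintype.card F : ℚ))
    (A : Matrix (Fin n) (Fin n) F) (hA : A.rank - (A * A).rank ≤ k) :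
    ((q ^ 2 - 2) * (q ^ 2 - q - 1) * (q - 1) / (q ^ 4 * (q + 1))) * q ^ (2 * n * k) ≤
      (Nat.card {p : Matrix (Fin k) (Fin n) F × Matrix (Fin n) (Fin k) F //
        ¬ (Polynomial.X ^ 2 ∣ minpoly F (A + p.2 * p.1))} : ℚ) ∧
    1 - 3 / q ≤ (q ^ 2 - 2) * (q ^ 2 - q - 1) * (q - 1) / (q ^ 4 * (q + 1)) := by
  have hq₂ : 2 ≤ q := hq ▸ mod_cast Fintype.one_lt_card
  have natCard_pairs :
      (Nat.card (Matrix (Fin k) (Fin n) F × Matrix (Fin n) (Fin k) F) : ℚ) = q ^ (2 * n * k) := by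
    rw [natCard_eq_pow_finrank (K := F), finrank_prod, finrank_matrix, finrank_matrix, hq]
    simp only [Nat.card_eq_fintype_card, Fintype.card_fin, finrank_self, mul_one, Nat.cast_pow]
    ring
  refine ⟨?_, one_sub_three_div_le_blockBound hq₂⟩
  rw [← natCard_pairs, ← le_div_iff₀ (by rw [natCard_pairs]; positivity)]
  calc (q ^ 2 - 2) * (q ^ 2 - q - 1) * (q - 1) / (q ^ 4 * (q + 1))
      ≤ injectivityBound F ^ 2 := by
        rw [injectivityBound, ← hq]
        exact blockBound_le_sq hq₂
    _ ≤ proportion {p : Matrix (Fin k) (Fin n) F × Matrix (Fin n) (Fin k) F |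
          ¬ X ^ 2 ∣ minpoly F (A + p.2 * p.1)} :=
        sq_injectivityBound_le_proportion_minpoly_matrix (by rwa [Fintype.card_fin])
end

section
/- Let F be a finite field with q elements, let n and k be positive integers, let A ∈ M_n(F), and let f ∈ F[z] be a monic irreducible polynomial of degree d that does not divide the minimal polynomial of A. Then the number of pairs (U, V) with U ∈ F^(k×n) and V ∈ F^(n×k) such that f does not divide the minimal polynomial of A + V·U is at least (1 − q^(−d)) · q^(2nk) if k = 1, and at least (1 − (q^d + 1)/q^(2d)) · q^(2nk) if k ≥ 2. -/
/-!
Let `a` be a root of `f` in the field `K = F[z]/(f)`, with `Q` elements. Then `f` divides the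
minimal polynomial of `B` exactly when `a` is an eigenvalue of `B` over `K`. Since `a` is not an
eigenvalue of `A`, it is one of `A + V U` exactly when the `k × k` matrix
`M = 1 - U (a - A)⁻¹ V` is singular, by the Weinstein–Aronszajn identity.

If `M z = 0` with `z ≠ 0`, put `w = (a - A)⁻¹ V z`. Then `z = U w` and `a w = A w + V z`, so the
entries of `w` have an `F`-span which is stable under `a`, hence equal to `K`, and `u ↦ u ⬝ w` maps
`F^n` onto `K`. Therefore, for a fixed `z ≠ 0`, a random row of `U` is compatible with `M z = 0`
with probability at most `1 / Q`, and `M z = 0` has probability at most `1 / Q ^ k`; by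
transposition the same holds for left kernel vectors.

Fix a row. A union bound over the lines of left kernel vectors that do not involve it bounds the
probability that the other rows of `M` are dependent by `(Q ^ (k - 1) - 1) / ((Q - 1) Q ^ k)`. If
they are independent, they determine the only possible kernel vector of `M` up to scaling, and
resampling the fixed row of `U`, which changes only that row of `M`, keeps this vector in the
kernel with probability at most `1 / Q`.
Together, `M` is singular with probability at most `1 / Q + 1 / Q ^ 2 - 1 / Q ^ (k + 1)`.
-/

open scoped Matrix

section Counting

variable {α β : Type*} [Finite α] [Finite β]

theorem ncard_mul_le_of_forall_fst {S T : Set (α × β)} {c : ℕ}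
    (h : ∀ a, {b | (a, b) ∈ S}.ncard * c ≤ {b | (a, b) ∈ T}.ncard) :
    S.ncard * c ≤ T.ncard := by
  have := Fintype.ofFinite α
  have ncard_eq_sum (R : Set (α × β)) : R.ncard = ∑ a, {b | (a, b) ∈ R}.ncard :=
    (Nat.card_congr (Equiv.subtypeProdEquivSigmaSubtype fun a b ↦ (a, b) ∈ R)).trans Nat.card_sigma
  rw [ncard_eq_sum, ncard_eq_sum, Finset.sum_mul]
  exact Finset.sum_le_sum fun a _ ↦ h a

theorem ncard_mul_le_of_forall_snd {S T : Set (α × β)} {c : ℕ}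
    (h : ∀ b, {a | (a, b) ∈ S}.ncard * c ≤ {a | (a, b) ∈ T}.ncard) :
    S.ncard * c ≤ T.ncard := by
  have ncard_swap (R : Set (α × β)) : (Prod.swap ⁻¹' R).ncard = R.ncard :=
    Set.ncard_preimage_of_injective_subset_range Prod.swap_injective
      (by simp [Prod.swap_surjective.range_eq])
  rw [← ncard_swap S, ← ncard_swap T]
  exact ncard_mul_le_of_forall_fst h

theorem ncard_mul_le_of_forall_update {κ : Type*} [Finite κ] [DecidableEq κ] [Nonempty β] (i : κ)
    {X G : Set (κ → β)} {c : ℕ} (hXG : ∀ U u, Function.update U i u ∈ X → U ∈ G)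
    (h : ∀ U ∈ G, {u | Function.update U i u ∈ X}.ncard * c ≤ Nat.card β) :
    X.ncard * c ≤ G.ncard := by
  let S : Set ((κ → β) × β) := {p | Function.update p.1 i p.2 ∈ X}
  have hS : S.ncard = X.ncard * Nat.card β := by
    let exchange : (κ → β) × β → (κ → β) × β := fun p ↦ (Function.update p.1 i p.2, p.1 i)
    have hexchange : Function.Involutive exchange := fun p ↦ by simp [exchange]
    rw [← Set.ncard_univ, ← Set.ncard_prod,
      ← Set.ncard_preimage_of_injective_subset_range hexchange.injective
        (by simp [hexchange.surjective.range_eq])]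
    congr 1
    ext p
    simp [S, exchange]
  have hSG : S.ncard * c ≤ (G ×ˢ (Set.univ : Set β)).ncard := by
    refine ncard_mul_le_of_forall_fst fun U ↦ ?_
    by_cases hU : U ∈ G
    · simpa [S, hU] using h U hU
    · simp [S, hU, fun u ↦ mt (hXG U u) hU]
  rw [hS, Set.ncard_prod, Set.ncard_univ, mul_right_comm] at hSG
  exact Nat.le_of_mul_le_mul_right hSG Nat.card_pos

theorem ncard_preimage_singleton_mul_card {E H L : Type*} [AddGroup E] [AddGroup H] [FunLike L E H]
    [AddMonoidHomClass L E H] (f : L) (hf : Function.Surjective f) (g : H) :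
    (f ⁻¹' {g}).ncard * Nat.card H = Nat.card E := by
  let φ : E →+ H := f
  have hφ : Function.Surjective φ := hf
  calc (f ⁻¹' {g}).ncard * Nat.card H
      = Nat.card φ.ker * φ.ker.index := by
        rw [AddSubgroup.index_ker, AddMonoidHom.range_eq_top.2 hφ, AddSubgroup.card_top]
        exact congrArg (· * _) (Nat.card_congr (AddMonoidHom.fiberEquivKerOfSurjective hφ g))
    _ = Nat.card E := φ.ker.card_mul_index

theorem ncard_ne_bot_mul_card_units_mul_le {K E : Type*} [DivisionRing K]
    [AddCommGroup E] [Module K E] [Finite E] (W : α → Submodule K E) {c : ℕ}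
    (h : ∀ y ≠ 0, {a | y ∈ W a}.ncard * c ≤ Nat.card α) :
    {a | W a ≠ ⊥}.ncard * Nat.card Kˣ * c ≤ (Nat.card E - 1) * Nat.card α := by
  let S : Set ({y : E // y ≠ 0} × α) := {p | (p.1 : E) ∈ W p.2}
  have hS : {a | W a ≠ ⊥}.ncard * Nat.card Kˣ ≤ S.ncard := by
    choose! y hyW hy0 using fun a (ha : W a ≠ ⊥) ↦ Submodule.exists_mem_ne_zero_of_ne_bot ha
    rw [← Nat.card_coe_set_eq, ← Nat.card_prod, ← Nat.card_coe_set_eq]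
    refine Nat.card_le_card_of_injective
      (fun p ↦ ⟨(⟨p.2 • y p.1, (smul_ne_zero_iff_ne _).2 (hy0 _ p.1.2)⟩, p.1),
        (W p.1).smul_mem (p.2 : K) (hyW _ p.1.2)⟩) ?_
    rintro ⟨⟨a, ha⟩, s⟩ ⟨⟨b, hb⟩, t⟩ hst
    simp only [Subtype.mk.injEq, Prod.mk.injEq] at hst
    obtain ⟨hst, rfl⟩ := hst
    rw [Units.ext (smul_left_injective K (hy0 a ha) hst)]
  have hle : S.ncard * c ≤ (Set.univ : Set ({y : E // y ≠ 0} × α)).ncard :=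
    ncard_mul_le_of_forall_fst fun y ↦ by simpa [S] using h y y.2
  have card_ne_zero : Nat.card {y : E // y ≠ 0} = Nat.card E - 1 := by
    rw [← Set.ncard_singleton (0 : E), ← Set.ncard_compl]
    rfl
  rw [Set.ncard_univ, Nat.card_prod, card_ne_zero] at hle
  exact (Nat.mul_le_mul_right c hS).trans hle

end Counting

section Span

variable {F K ι κ : Type*}

theorem submodule_eq_top_of_mul_mem [CommSemiring F] [DivisionRing K] [Algebra F K] {s : Set K}
    (hs : Algebra.adjoin F s = ⊤) {W : Submodule F K} (hW : W ≠ ⊥)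
    (h : ∀ a ∈ s, ∀ x ∈ W, a * x ∈ W) : W = ⊤ := by
  have mul_mem (b x : K) (hx : x ∈ W) : b * x ∈ W := by
    have hb : b ∈ Algebra.adjoin F s := hs ▸ Algebra.mem_top
    induction hb using Algebra.adjoin_induction generalizing x with
    | mem a ha => exact h a ha x hx
    | algebraMap r => simpa only [← Algebra.smul_def] using W.smul_mem r hx
    | add b c _ _ hb hc => simpa only [add_mul] using W.add_mem (hb x hx) (hc x hx)
    | mul b c _ _ hb hc => simpa only [mul_assoc] using hb _ (hc x hx)
  obtain ⟨x, hx, hx0⟩ := W.exists_mem_ne_zero_of_ne_bot hW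
  exact eq_top_iff.2 fun y _ ↦ by simpa [hx0] using mul_mem (y / x) x hx

theorem map_algebraMap_mulVec_apply [CommSemiring F] [Semiring K] [Algebra F K] [Fintype ι]
    (U : Matrix κ ι F) (w : ι → K) (i : κ) :
    (U.map (algebraMap F K) *ᵥ w) i = Fintype.linearCombination F w (U i) := by
  simp [Matrix.mulVec, dotProduct, Fintype.linearCombination_apply, Algebra.smul_def]

theorem map_algebraMap_mulVec_mem_span [CommSemiring F] [Semiring K] [Algebra F K] [Fintype ι]
    (U : Matrix κ ι F) (w : ι → K) (i : κ) :
    (U.map (algebraMap F K) *ᵥ w) i ∈ Submodule.span F (Set.range w) := by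
  rw [map_algebraMap_mulVec_apply, ← Fintype.range_linearCombination]
  exact LinearMap.mem_range_self _ _

theorem span_range_eq_top_of_sub_mulVec [CommRing F] [Field K] [Algebra F K] [Fintype ι]
    [Fintype κ] {a : K} (ha : Algebra.adjoin F {a} = ⊤) (A : Matrix ι ι F) (V : Matrix ι κ F)
    {w : ι → K} {z : κ → K}
    (hw : a • w - A.map (algebraMap F K) *ᵥ w = V.map (algebraMap F K) *ᵥ z) (hw0 : w ≠ 0)
    (hz : ∀ j, z j ∈ Submodule.span F (Set.range w)) :
    Submodule.span F (Set.range w) = ⊤ := by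
  set W := Submodule.span F (Set.range w)
  have mul_mem (i : ι) : a * w i ∈ W := by
    have hi : a * w i = (V.map (algebraMap F K) *ᵥ z) i + (A.map (algebraMap F K) *ᵥ w) i :=
      sub_eq_iff_eq_add.1 (congrFun hw i)
    have hVz : (V.map (algebraMap F K) *ᵥ z) i ∈ W :=
      Submodule.span_le.2 (Set.range_subset_iff.2 hz) (map_algebraMap_mulVec_mem_span V z i)
    exact hi ▸ W.add_mem hVz (map_algebraMap_mulVec_mem_span A w i)
  have hW : W ≠ ⊥ := fun h ↦ hw0 <| funext fun i ↦
    Submodule.span_eq_bot.1 h _ (Set.mem_range_self i)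
  refine submodule_eq_top_of_mul_mem ha hW ?_
  rintro b hb x hx
  rw [hb]
  have hle : W ≤ W.comap (LinearMap.mulLeft F a) :=
    Submodule.span_le.2 (Set.range_subset_iff.2 mul_mem)
  exact hle hx

end Span

section RowRelations

variable {K κ : Type*} [Field K] [Fintype κ]

/-- The linear relations among the rows of `M` other than row `i`, encoded as the vectors of the
left kernel of `M` whose `i`-th coordinate vanishes. -/
def rowRelationsOff {η : Type*} (M : Matrix κ η K) (i : κ) :
    Submodule K (LinearMap.ker (LinearMap.proj i : (κ → K) →ₗ[K] K)) :=
  LinearMap.ker (M.vecMulLinear.domRestrict _)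

theorem mem_rowRelationsOff {η : Type*} {M : Matrix κ η K} {i : κ}
    {y : LinearMap.ker (LinearMap.proj i : (κ → K) →ₗ[K] K)} :
    y ∈ rowRelationsOff M i ↔ (y : κ → K) ᵥ* M = 0 :=
  Iff.rfl

theorem card_ker_proj_mul_card (i : κ) :
    Nat.card (LinearMap.ker (LinearMap.proj i : (κ → K) →ₗ[K] K)) * Nat.card K
      = Nat.card K ^ Fintype.card κ := by
  rw [← Nat.card_eq_fintype_card, ← Nat.card_fun]
  exact ncard_preimage_singleton_mul_card (LinearMap.proj i : (κ → K) →ₗ[K] K)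
    (LinearMap.proj_surjective i) 0

variable [DecidableEq κ]

theorem vecMul_updateRow_of_apply_eq_zero {η : Type*} (M : Matrix κ η K) {i : κ} (r : η → K)
    {y : κ → K} (hy : y i = 0) : y ᵥ* M.updateRow i r = y ᵥ* M := by
  ext j
  simp only [Matrix.vecMul, dotProduct]
  refine Finset.sum_congr rfl fun l _ ↦ ?_
  obtain rfl | hl := eq_or_ne l i
  · simp [hy]
  · rw [Matrix.updateRow_ne hl]

theorem rowRelationsOff_updateRow {η : Type*} (M : Matrix κ η K) (i : κ) (r : η → K) :
    rowRelationsOff (M.updateRow i r) i = rowRelationsOff M i := by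
  ext y
  rw [mem_rowRelationsOff, mem_rowRelationsOff, vecMul_updateRow_of_apply_eq_zero M r y.2]

theorem exists_mulVec_eq_zero_of_rowRelationsOff_eq_bot {M : Matrix κ κ K} {i : κ}
    (hM : rowRelationsOff M i = ⊥) :
    ∃ z ≠ 0, ∀ r, (M.updateRow i r).det = 0 → M.updateRow i r *ᵥ z = 0 := by
  obtain ⟨z, hz, hMz⟩ := Matrix.exists_mulVec_eq_zero_iff.2 <|
    Matrix.det_eq_zero_of_row_eq_zero (A := M.updateRow i 0) i (by simp)
  refine ⟨z, hz, fun r hr ↦ ?_⟩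
  have hrz : M.updateRow i r *ᵥ z = Pi.single i (r ⬝ᵥ z) := by
    rw [Matrix.updateRow_mulVec, zero_dotProduct] at hMz
    rw [Matrix.updateRow_mulVec, ← Function.update_idem, hMz]
    rfl
  obtain ⟨y, hy, hyr⟩ := Matrix.exists_vecMul_eq_zero_iff.2 hr
  have hyi : y i ≠ 0 := fun hyi ↦ hy <| by
    rw [vecMul_updateRow_of_apply_eq_zero M r hyi] at hyr
    exact congrArg Subtype.val
      ((Submodule.eq_bot_iff _).1 hM ⟨y, hyi⟩ (mem_rowRelationsOff.2 hyr))
  have hyrz : y i * (r ⬝ᵥ z) = 0 := by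
    rw [← dotProduct_single, ← hrz, Matrix.dotProduct_mulVec, hyr, zero_dotProduct]
  rw [hrz, (mul_eq_zero.1 hyrz).resolve_left hyi, Pi.single_zero]

end RowRelations

section Spectrum

variable {F : Type*} [Field F] {ι : Type*} [Fintype ι] [DecidableEq ι]

theorem aeval_minpoly_eq_zero_iff_mem_spectrum {K : Type*} [Field K] [Algebra F K]
    (B : Matrix ι ι F) (a : K) :
    Polynomial.aeval a (minpoly F B) = 0 ↔ a ∈ spectrum K (B.map (algebraMap F K)) := by
  have aeval_eq_eval (p : Polynomial F) :
      Polynomial.aeval a p = (p.map (algebraMap F K)).eval a := by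
    rw [Polynomial.eval_map_algebraMap]
  constructor
  · intro h
    rw [Matrix.mem_spectrum_iff_isRoot_charpoly, Matrix.charpoly_map, Polynomial.IsRoot,
      ← aeval_eq_eval]
    exact Polynomial.aeval_eq_zero_of_dvd_aeval_eq_zero (Matrix.minpoly_dvd_charpoly B) h
  · intro h
    have haeval : Polynomial.aeval (B.map (algebraMap F K)) ((minpoly F B).map (algebraMap F K))
        = 0 := by
      rw [Polynomial.aeval_map_algebraMap]
      exact (Polynomial.aeval_algHom_apply (Algebra.ofId F K).mapMatrix B (minpoly F B)).trans
        (by rw [minpoly.aeval, map_zero])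
    have hmem := spectrum.subset_polynomial_aeval _ ((minpoly F B).map (algebraMap F K))
      ⟨a, h, rfl⟩
    rw [haeval] at hmem
    rw [aeval_eq_eval]
    by_contra h0
    exact spectrum.notMem_iff.2 (by simpa using (isUnit_iff_ne_zero.2 h0).map (algebraMap K _)) hmem

theorem dvd_minpoly_iff_root_mem_spectrum (B : Matrix ι ι F) (f : Polynomial F)
    [Fact (Irreducible f)] :
    f ∣ minpoly F B ↔
      AdjoinRoot.root f ∈ spectrum (AdjoinRoot f) (B.map (algebraMap F (AdjoinRoot f))) := by
  rw [← aeval_minpoly_eq_zero_iff_mem_spectrum, AdjoinRoot.aeval_eq, AdjoinRoot.mk_eq_zero]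

end Spectrum

section ReturnDifference

variable {F K : Type*} [Field F] [Field K] [Algebra F K]
variable {ι κ : Type*} [Fintype ι] [DecidableEq ι] [DecidableEq κ]

/-- The return difference `1 - U (a - A)⁻¹ V` over `K` of the update `A + V U` at `a`. Its
determinant is the ratio of those of `a - (A + V U)` and `a - A`, which moves the question whether
`a` is an eigenvalue of the update to a matrix of the size of the update. -/
noncomputable def returnDifference (a : K) (A : Matrix ι ι F) (U : Matrix κ ι F)
    (V : Matrix ι κ F) : Matrix κ κ K :=
  1 - U.map (algebraMap F K) * (resolvent (A.map (algebraMap F K)) a * V.map (algebraMap F K))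

theorem returnDifference_transpose (a : K) (A : Matrix ι ι F) (U : Matrix κ ι F)
    (V : Matrix ι κ F) :
    (returnDifference a A U V)ᵀ = returnDifference a Aᵀ Vᵀ Uᵀ := by
  simp only [returnDifference, resolvent, ← Matrix.nonsing_inv_eq_ringInverse,
    Matrix.transpose_sub, Matrix.transpose_one, Matrix.transpose_mul, Matrix.transpose_map,
    Matrix.transpose_nonsing_inv, Matrix.mul_assoc, Matrix.algebraMap_eq_diagonal,
    Matrix.diagonal_transpose]

theorem returnDifference_updateRow (a : K) (A : Matrix ι ι F) (U : Matrix κ ι F)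
    (V : Matrix ι κ F) (i : κ) (u : ι → F) :
    returnDifference a A (U.updateRow i u) V = (returnDifference a A U V).updateRow i
      (returnDifference a A (U.updateRow i u) V i) := by
  ext l j
  obtain rfl | hl := eq_or_ne l i
  · rw [Matrix.updateRow_self]
  · rw [Matrix.updateRow_ne hl]
    simp [returnDifference, Matrix.map_updateRow, Matrix.updateRow_mul, hl]

variable [Fintype κ]

theorem mem_spectrum_add_mul_iff {a : K} {A : Matrix ι ι F}
    (hA : a ∉ spectrum K (A.map (algebraMap F K))) (U : Matrix κ ι F) (V : Matrix ι κ F) :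
    a ∈ spectrum K ((A + V * U).map (algebraMap F K)) ↔ (returnDifference a A U V).det = 0 := by
  rw [spectrum.notMem_iff] at hA
  set S := algebraMap K (Matrix ι ι K) a - A.map (algebraMap F K) with hS
  have hfactor : algebraMap K (Matrix ι ι K) a - (A + V * U).map (algebraMap F K)
      = S * (1 - resolvent (A.map (algebraMap F K)) a * V.map (algebraMap F K)
          * U.map (algebraMap F K)) := by
    rw [mul_sub, mul_one, resolvent, ← hS, Matrix.mul_assoc, Ring.mul_inverse_cancel_left _ _ hA,
      Matrix.map_add _ (map_add _), Matrix.map_mul, hS, sub_sub]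
  rw [spectrum.mem_iff, Matrix.isUnit_iff_isUnit_det, isUnit_iff_ne_zero, not_not, hfactor,
    Matrix.det_mul, Matrix.det_one_sub_mul_comm, mul_eq_zero, returnDifference]
  exact or_iff_right ((Matrix.isUnit_iff_isUnit_det _).1 hA).ne_zero

theorem returnDifference_mulVec (a : K) (A : Matrix ι ι F) (U : Matrix κ ι F) (V : Matrix ι κ F)
    (z : κ → K) (l : κ) :
    (returnDifference a A U V *ᵥ z) l = z l - Fintype.linearCombination F
      (resolvent (A.map (algebraMap F K)) a *ᵥ (V.map (algebraMap F K) *ᵥ z)) (U l) := by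
  rw [returnDifference, Matrix.sub_mulVec, Matrix.one_mulVec, ← Matrix.mulVec_mulVec,
    ← Matrix.mulVec_mulVec, Pi.sub_apply, map_algebraMap_mulVec_apply]

theorem linearCombination_surjective_of_returnDifference_mulVec {a : K}
    (ha : Algebra.adjoin F {a} = ⊤) {A : Matrix ι ι F}
    (hA : a ∉ spectrum K (A.map (algebraMap F K))) {U : Matrix κ ι F} {V : Matrix ι κ F}
    {z : κ → K} (hz : z ≠ 0) (hker : returnDifference a A U V *ᵥ z = 0) :
    Function.Surjective (Fintype.linearCombination F
      (resolvent (A.map (algebraMap F K)) a *ᵥ (V.map (algebraMap F K) *ᵥ z))) := by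
  set w := resolvent (A.map (algebraMap F K)) a *ᵥ (V.map (algebraMap F K) *ᵥ z) with hw
  have hzw (l : κ) : z l = Fintype.linearCombination F w (U l) :=
    sub_eq_zero.1 ((returnDifference_mulVec a A U V z l).symm.trans (congrFun hker l))
  have hshift : a • w - A.map (algebraMap F K) *ᵥ w = V.map (algebraMap F K) *ᵥ z := by
    have hunit := spectrum.notMem_iff.1 hA
    rw [← Matrix.one_mulVec (V.map _ *ᵥ z), ← Ring.mul_inverse_cancel _ hunit,
      ← Matrix.mulVec_mulVec, ← resolvent, ← hw, Matrix.sub_mulVec, Algebra.algebraMap_eq_smul_one,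
      Matrix.smul_mulVec, Matrix.one_mulVec]
  have hw0 : w ≠ 0 := fun h ↦ hz <| funext fun l ↦ by
    simp [hzw l, h, Fintype.linearCombination_apply]
  rw [← LinearMap.range_eq_top, Fintype.range_linearCombination]
  refine span_range_eq_top_of_sub_mulVec ha A V hshift hw0 fun l ↦ ?_
  rw [hzw l, ← Fintype.range_linearCombination]
  exact LinearMap.mem_range_self _ _

variable [Finite F] {a : K}

theorem ncard_updateRow_mulVec_eq_zero_mul_le (ha : Algebra.adjoin F {a} = ⊤) {A : Matrix ι ι F}
    (hA : a ∉ spectrum K (A.map (algebraMap F K))) (U : Matrix κ ι F) (V : Matrix ι κ F) (i : κ)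
    {z : κ → K} (hz : z ≠ 0) :
    {u | returnDifference a A (U.updateRow i u) V *ᵥ z = 0}.ncard * Nat.card K
      ≤ Nat.card (ι → F) := by
  obtain hempty | ⟨u₀, hu₀⟩ :=
    {u | returnDifference a A (U.updateRow i u) V *ᵥ z = 0}.eq_empty_or_nonempty
  · simp [hempty]
  · rw [← ncard_preimage_singleton_mul_card _
      (linearCombination_surjective_of_returnDifference_mulVec ha hA hz hu₀) (z i)]
    refine Nat.mul_le_mul_right _ (Set.ncard_le_ncard fun u hu ↦ ?_)
    have hui := (returnDifference_mulVec a A _ V z i).symm.trans (congrFun hu i)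
    rw [Matrix.updateRow_self] at hui
    exact (sub_eq_zero.1 hui).symm

theorem ncard_returnDifference_mulVec_eq_zero_mul_le (ha : Algebra.adjoin F {a} = ⊤)
    {A : Matrix ι ι F} (hA : a ∉ spectrum K (A.map (algebraMap F K))) (V : Matrix ι κ F)
    {z : κ → K} (hz : z ≠ 0) :
    {U | returnDifference a A U V *ᵥ z = 0}.ncard * Nat.card K ^ Fintype.card κ
      ≤ Nat.card (Matrix κ ι F) := by
  obtain hempty | ⟨U₀, hU₀⟩ := {U | returnDifference a A U V *ᵥ z = 0}.eq_empty_or_nonempty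
  · simp [hempty]
  · set L := Fintype.linearCombination F
      (resolvent (A.map (algebraMap F K)) a *ᵥ (V.map (algebraMap F K) *ᵥ z))
    have hL : Function.Surjective (L.compLeft κ) :=
      (linearCombination_surjective_of_returnDifference_mulVec ha hA hz hU₀).comp_left
    rw [← Nat.card_eq_fintype_card, ← Nat.card_fun]
    refine (Nat.mul_le_mul_right _ (Set.ncard_le_ncard fun U hU ↦ ?_)).trans
      (ncard_preimage_singleton_mul_card _ hL z).le
    exact funext fun l ↦ (sub_eq_zero.1
      ((returnDifference_mulVec a A U V z l).symm.trans (congrFun hU l))).symm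

theorem ncard_vecMul_returnDifference_eq_zero_mul_le (ha : Algebra.adjoin F {a} = ⊤)
    {A : Matrix ι ι F} (hA : a ∉ spectrum K (A.map (algebraMap F K))) {y : κ → K} (hy : y ≠ 0) :
    {p : Matrix κ ι F × Matrix ι κ F | y ᵥ* returnDifference a A p.1 p.2 = 0}.ncard
        * Nat.card K ^ Fintype.card κ
      ≤ Nat.card (Matrix κ ι F × Matrix ι κ F) := by
  have hAt : a ∉ spectrum K (Aᵀ.map (algebraMap F K)) := by
    rwa [Matrix.mem_spectrum_iff_isRoot_charpoly, Matrix.transpose_map,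
      Matrix.charpoly_transpose, ← Matrix.mem_spectrum_iff_isRoot_charpoly]
  rw [← Set.ncard_univ (Matrix κ ι F × Matrix ι κ F)]
  refine ncard_mul_le_of_forall_fst fun U ↦ ?_
  have hcount := ncard_returnDifference_mulVec_eq_zero_mul_le ha hAt Uᵀ hy
  rw [← Set.ncard_preimage_of_injective_subset_range Matrix.transpose_injective
      fun W _ ↦ ⟨Wᵀ, W.transpose_transpose⟩,
    Nat.card_congr (Matrix.transposeAddEquiv κ ι F).toEquiv] at hcount
  simpa [← returnDifference_transpose, Matrix.mulVec_transpose] using hcount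

theorem ncard_rowRelationsOff_ne_bot_mul_le [Finite K] (ha : Algebra.adjoin F {a} = ⊤)
    {A : Matrix ι ι F} (hA : a ∉ spectrum K (A.map (algebraMap F K))) (i : κ) :
    {p : Matrix κ ι F × Matrix ι κ F |
          rowRelationsOff (returnDifference a A p.1 p.2) i ≠ ⊥}.ncard
        * Nat.card Kˣ * Nat.card K ^ Fintype.card κ
      ≤ (Nat.card (LinearMap.ker (LinearMap.proj i : (κ → K) →ₗ[K] K)) - 1)
        * Nat.card (Matrix κ ι F × Matrix ι κ F) :=
  ncard_ne_bot_mul_card_units_mul_le _ fun _ hy ↦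
    ncard_vecMul_returnDifference_eq_zero_mul_le ha hA (Subtype.coe_ne_coe.2 hy)

theorem ncard_rowRelationsOff_eq_bot_and_det_eq_zero_mul_le (ha : Algebra.adjoin F {a} = ⊤)
    {A : Matrix ι ι F} (hA : a ∉ spectrum K (A.map (algebraMap F K))) (i : κ) :
    {p : Matrix κ ι F × Matrix ι κ F | rowRelationsOff (returnDifference a A p.1 p.2) i = ⊥ ∧
        (returnDifference a A p.1 p.2).det = 0}.ncard * Nat.card K
      ≤ {p : Matrix κ ι F × Matrix ι κ F |
          rowRelationsOff (returnDifference a A p.1 p.2) i = ⊥}.ncard := by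
  refine ncard_mul_le_of_forall_snd fun V ↦ ncard_mul_le_of_forall_update i ?_ ?_
  · rintro (U : Matrix κ ι F) u ⟨hU, -⟩
    change rowRelationsOff (returnDifference a A (U.updateRow i u) V) i = ⊥ at hU
    rwa [returnDifference_updateRow, rowRelationsOff_updateRow] at hU
  · intro (U : Matrix κ ι F) hU
    obtain ⟨z, hz, hker⟩ := exists_mulVec_eq_zero_of_rowRelationsOff_eq_bot hU
    refine (Nat.mul_le_mul_right _ (Set.ncard_le_ncard ?_)).trans
      (ncard_updateRow_mulVec_eq_zero_mul_le ha hA U V i hz)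
    rintro u ⟨-, hu⟩
    change (returnDifference a A (U.updateRow i u) V).det = 0 at hu
    change returnDifference a A (U.updateRow i u) V *ᵥ z = 0
    rw [returnDifference_updateRow] at hu ⊢
    exact hker _ hu

/- Of `T` points, `X` are singular and `D` have a row relation off the fixed row; `Y` of the
singular ones lie among the `N` points without such a relation. -/
theorem le_mul_of_count_bounds {Q E k T X Y D N : ℕ} (hQ : 1 < Q) (hE : E * Q = Q ^ k)
    (hX : X ≤ Y + D) (hY : Y * Q ≤ N) (hN : D + N = T)
    (hD : D * (Q - 1) * Q ^ k ≤ (E - 1) * T) :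
    (X : ℚ) ≤ (1 / Q + 1 / Q ^ 2 - 1 / Q ^ (k + 1)) * T := by
  have hQ0 : (0 : ℚ) < Q := by positivity
  have hE1 : 1 ≤ E := Nat.pos_of_mul_pos_right (hE ▸ Nat.pow_pos (zero_lt_one.trans hQ))
  qify [hQ.le, hE1] at hE hX hY hN hD
  have hEQ : (E : ℚ) = Q ^ k / Q := (eq_div_iff hQ0.ne').2 hE
  have hY' : (Y : ℚ) ≤ (T - D) / Q := by
    rwa [le_div_iff₀ hQ0, ← hN, add_sub_cancel_left]
  have hD' : (D * (Q - 1) : ℚ) ≤ (1 / Q - 1 / Q ^ k) * T := by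
    refine le_of_mul_le_mul_right (hD.trans_eq ?_) (pow_pos hQ0 k)
    rw [hEQ]
    field_simp
  calc (X : ℚ) ≤ (T - D) / Q + D := hX.trans (by gcongr)
    _ = T / Q + D * (Q - 1) / Q := by field_simp; ring
    _ ≤ T / Q + (1 / Q - 1 / Q ^ k) * T / Q := by gcongr
    _ = (1 / Q + 1 / Q ^ 2 - 1 / Q ^ (k + 1)) * T := by field_simp; ring

theorem ncard_returnDifference_det_eq_zero_le [Finite K] [Nonempty κ]
    (ha : Algebra.adjoin F {a} = ⊤) {A : Matrix ι ι F}
    (hA : a ∉ spectrum K (A.map (algebraMap F K))) :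
    ({p : Matrix κ ι F × Matrix ι κ F | (returnDifference a A p.1 p.2).det = 0}.ncard : ℚ)
      ≤ (1 / Nat.card K + 1 / Nat.card K ^ 2 - 1 / Nat.card K ^ (Fintype.card κ + 1))
        * Nat.card (Matrix κ ι F × Matrix ι κ F) := by
  obtain ⟨i⟩ := ‹Nonempty κ›
  let D : Set (Matrix κ ι F × Matrix ι κ F) :=
    {p | rowRelationsOff (returnDifference a A p.1 p.2) i ≠ ⊥}
  let S : Set (Matrix κ ι F × Matrix ι κ F) := {p | (returnDifference a A p.1 p.2).det = 0}
  have hcompl : {p : Matrix κ ι F × Matrix ι κ F |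
      rowRelationsOff (returnDifference a A p.1 p.2) i = ⊥} = Dᶜ := by
    ext p
    simp [D]
  have hcover : S.ncard ≤ (Dᶜ ∩ S).ncard + D.ncard := by
    refine (Set.ncard_le_ncard fun p hp ↦ ?_).trans (Set.ncard_union_le _ _)
    by_cases hD : p ∈ D
    exacts [Or.inr hD, Or.inl ⟨hD, hp⟩]
  have hoff : (Dᶜ ∩ S).ncard * Nat.card K ≤ Dᶜ.ncard := by
    have := ncard_rowRelationsOff_eq_bot_and_det_eq_zero_mul_le ha hA i
    rwa [Set.ofPred_and, hcompl] at this
  have hrel := ncard_rowRelationsOff_ne_bot_mul_le ha hA i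
  rw [Nat.card_units] at hrel
  exact le_mul_of_count_bounds (Finite.one_lt_card (α := K)) (card_ker_proj_mul_card i) hcover hoff
    (Set.ncard_add_ncard_compl D) hrel

end ReturnDifference

theorem natCard_adjoinRoot {F : Type*} [Field F] {f : Polynomial F} (hf : f ≠ 0) :
    Nat.card (AdjoinRoot f) = Nat.card F ^ f.natDegree := by
  have := (AdjoinRoot.powerBasis hf).finite
  rw [Module.natCard_eq_pow_finrank (K := F), (AdjoinRoot.powerBasis hf).finrank,
    AdjoinRoot.powerBasis_dim]

theorem natCard_matrix_prod_matrix (R ι κ : Type*) [Fintype ι] [Fintype κ] :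
    Nat.card (Matrix κ ι R × Matrix ι κ R)
      = Nat.card R ^ (2 * Fintype.card ι * Fintype.card κ) := by
  simp only [Matrix, Nat.card_prod, Nat.card_fun, Nat.card_eq_fintype_card (α := ι),
    Nat.card_eq_fintype_card (α := κ)]
  ring

section MinpolyUpdate

variable {F : Type*} [Field F] {ι κ : Type*} [Fintype ι] [DecidableEq ι] [Fintype κ]
  {A : Matrix ι ι F} {f : Polynomial F}

theorem dvd_minpoly_add_mul_iff [DecidableEq κ] [Fact (Irreducible f)] (hnd : ¬ f ∣ minpoly F A)
    (U : Matrix κ ι F) (V : Matrix ι κ F) :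
    f ∣ minpoly F (A + V * U) ↔ (returnDifference (AdjoinRoot.root f) A U V).det = 0 :=
  (dvd_minpoly_iff_root_mem_spectrum _ f).trans
    (mem_spectrum_add_mul_iff (mt (dvd_minpoly_iff_root_mem_spectrum A f).2 hnd) U V)

theorem preserve_minpoly_not_div_count_general [Finite F] [Nonempty κ] (hirr : Irreducible f)
    (hnd : ¬ f ∣ minpoly F A) {Q : ℚ} (hQ : Q = (Nat.card F : ℚ) ^ f.natDegree) :
    (1 - (Q + 1) / Q ^ 2 + 1 / Q ^ (Fintype.card κ + 1))
        * (Nat.card F : ℚ) ^ (2 * Fintype.card ι * Fintype.card κ)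
      ≤ Nat.card {p : Matrix κ ι F × Matrix ι κ F // ¬ f ∣ minpoly F (A + p.2 * p.1)} := by
  classical
  have : Fact (Irreducible f) := ⟨hirr⟩
  have := (AdjoinRoot.powerBasis hirr.ne_zero).finite
  have := Module.finite_of_finite F (M := AdjoinRoot f)
  have hbound := ncard_returnDifference_det_eq_zero_le (κ := κ)
    (AdjoinRoot.adjoinRoot_eq_top (f := f))
    (mt (dvd_minpoly_iff_root_mem_spectrum A f).2 hnd)
  simp only [← dvd_minpoly_add_mul_iff hnd, natCard_adjoinRoot hirr.ne_zero,
    natCard_matrix_prod_matrix, Nat.cast_pow, ← hQ] at hbound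
  have hcompl := Set.ncard_add_ncard_compl
    {p : Matrix κ ι F × Matrix ι κ F | f ∣ minpoly F (A + p.2 * p.1)}
  rw [natCard_matrix_prod_matrix] at hcompl
  qify at hcompl
  have hQ0 : Q ≠ 0 := by
    rw [hQ]
    exact pow_ne_zero _ (Nat.cast_ne_zero.2 Nat.card_pos.ne')
  have hsplit : (Q + 1) / Q ^ 2 = 1 / Q + 1 / Q ^ 2 := by field_simp
  change _ ≤ (({p : Matrix κ ι F × Matrix ι κ F | f ∣ minpoly F (A + p.2 * p.1)}ᶜ.ncard : ℕ) : ℚ)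
  rw [hsplit]
  linarith

end MinpolyUpdate

/-- if a monic irreducible `f` of degree `d` does not divide the
minimal polynomial of `A`, then the number of pairs `(U, V)` such that `f` does
not divide the minimal polynomial of `A + V·U` is at least `(1 - q^{-d}) q^(2nk)`
if `k = 1` and at least `(1 - (q^d + 1)/q^{2d}) q^(2nk)` if `k ≥ 2`. -/
theorem preserve_minpoly_not_div_count
    {F : Type*} [Field F] [Fintype F] (n k d : ℕ) (hn : 0 < n) (hk : 0 < k)
    (q : ℚ) (hq : q = (Fintype.card F : ℚ))
    (A : Matrix (Fin n) (Fin n) F) (f : Polynomial F)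
    (hmonic : f.Monic) (hirr : Irreducible f) (hdeg : f.natDegree = d)
    (hnd : ¬ (f ∣ minpoly F A)) :
    (k = 1 → (1 - 1 / q ^ d) * q ^ (2 * n * k) ≤
      (Nat.card {p : Matrix (Fin k) (Fin n) F × Matrix (Fin n) (Fin k) F //
        ¬ (f ∣ minpoly F (A + p.2 * p.1))} : ℚ)) ∧
    (2 ≤ k → (1 - (q ^ d + 1) / q ^ (2 * d)) * q ^ (2 * n * k) ≤
      (Nat.card {p : Matrix (Fin k) (Fin n) F × Matrix (Fin n) (Fin k) F //
        ¬ (f ∣ minpoly F (A + p.2 * p.1))} : ℚ)) := by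
  have hQ : q ^ d = (Nat.card F : ℚ) ^ f.natDegree := by
    rw [hq, hdeg, Nat.card_eq_fintype_card]
  have : Nonempty (Fin k) := ⟨⟨0, hk⟩⟩
  have hbound := preserve_minpoly_not_div_count_general (κ := Fin k) hirr hnd hQ
  rw [Nat.card_eq_fintype_card, ← hq, Fintype.card_fin, Fintype.card_fin] at hbound
  have hq0 : 0 < q := hq ▸ Nat.cast_pos.2 Fintype.card_pos
  refine ⟨?_, fun _ ↦ ?_⟩
  · rintro rfl
    refine Eq.trans_le ?_ hbound
    field_simp
    ring
  · refine le_trans ?_ hbound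
    rw [← pow_mul, mul_comm d 2]
    gcongr
    exact le_add_of_nonneg_right (by positivity)
end
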